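/- Let f : X → X' be a surjective homomorphism of KU-algebras, let d be a self map of X and d' a self map of X' such that f ∘ d = d' ∘ f. If β is a fuzzy right derivations KU-ideal of X' with respect to d', then the preimage μ = β ∘ f is a fuzzy right derivations KU-ideal of X with respect to d. -/

import Mathlib

/-- A KU-algebra: a set `X` with a binary operation `⋆` and a constant `𝟎` satisfying
(KU1) `(x⋆y)⋆((y⋆z)⋆(x⋆z)) = 𝟎`, (KU2) `x⋆𝟎 = 𝟎`, (KU3) `𝟎⋆x = x`,
(KU4) `x⋆y = 𝟎` and `y⋆x = 𝟎` imply `x = y`. -/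
class KUAlgebra (X : Type*) where
  star : X → X → X
  zero : X
  ku1 : ∀ x y z : X, star (star x y) (star (star y z) (star x z)) = zero
  ku2 : ∀ x : X, star x zero = zero
  ku3 : ∀ x : X, star zero x = x
  ku4 : ∀ x y : X, star x y = zero → star y x = zero → x = y

infixl:70 " ⋆ " => KUAlgebra.star
notation "𝟎" => KUAlgebra.zero

/-- The order `x ≤ y ↔ y ⋆ x = 𝟎` on a KU-algebra. -/
def KUle {X : Type*} [KUAlgebra X] (x y : X) : Prop := y ⋆ x = 𝟎

/-- `x ∧ y := (x ⋆ y) ⋆ y` in a KU-algebra. -/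
def KUwedge {X : Type*} [KUAlgebra X] (x y : X) : X := (x ⋆ y) ⋆ y

/-- An (ℓ,r)-derivation: `d(x⋆y) = (d(x)⋆y) ∧ (x⋆d(y))`. -/
def IsLRDeriv {X : Type*} [KUAlgebra X] (d : X → X) : Prop :=
  ∀ x y : X, d (x ⋆ y) = KUwedge (d x ⋆ y) (x ⋆ d y)

/-- An (r,ℓ)-derivation: `d(x⋆y) = (x⋆d(y)) ∧ (d(x)⋆y)`. -/
def IsRLDeriv {X : Type*} [KUAlgebra X] (d : X → X) : Prop :=
  ∀ x y : X, d (x ⋆ y) = KUwedge (x ⋆ d y) (d x ⋆ y)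

/-- A derivation is both an (ℓ,r)- and an (r,ℓ)-derivation. -/
def IsDeriv {X : Type*} [KUAlgebra X] (d : X → X) : Prop := IsLRDeriv d ∧ IsRLDeriv d

/-- A fuzzy left derivations KU-ideal of `X` with respect to a self map `d`:
a fuzzy set `μ : X → [0,1]` with `μ 𝟎 ≥ μ x` and
`μ (d (x ⋆ z)) ≥ min (μ (d x ⋆ (y ⋆ z))) (μ (d y))`. -/
def IsFuzzyLeftDerivKUIdeal {X : Type*} [KUAlgebra X] (d : X → X) (μ : X → ℝ) : Prop :=
  (∀ x : X, μ x ∈ Set.Icc (0 : ℝ) 1) ∧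
  (∀ x : X, μ 𝟎 ≥ μ x) ∧
  (∀ x y z : X, μ (d (x ⋆ z)) ≥ min (μ (d x ⋆ (y ⋆ z))) (μ (d y)))

/-- A fuzzy right derivations KU-ideal of `X` with respect to a self map `d`:
a fuzzy set `μ : X → [0,1]` with `μ 𝟎 ≥ μ x` and
`μ (d (x ⋆ z)) ≥ min (μ (x ⋆ d (y ⋆ z))) (μ (d y))`. -/
def IsFuzzyRightDerivKUIdeal {X : Type*} [KUAlgebra X] (d : X → X) (μ : X → ℝ) : Prop :=
  (∀ x : X, μ x ∈ Set.Icc (0 : ℝ) 1) ∧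
  (∀ x : X, μ 𝟎 ≥ μ x) ∧
  (∀ x y z : X, μ (d (x ⋆ z)) ≥ min (μ (x ⋆ d (y ⋆ z))) (μ (d y)))

/-- A fuzzy set `μ` has the sup property if every nonempty subset `T` contains a point
at which `μ` attains `sup_{t ∈ T} μ t`. -/
def SupProperty {X : Type*} (μ : X → ℝ) : Prop :=
  ∀ T : Set X, T.Nonempty → ∃ t₀ ∈ T, μ t₀ = sSup (μ '' T)

open Classical in
/-- The image of a fuzzy set `μ` under `f`: `f(μ)(y) = sup {μ x : f x = y}` when the
preimage of `y` is nonempty, and `0` otherwise. -/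
noncomputable def fuzzyImage {X Y : Type*} (f : X → Y) (μ : X → ℝ) : Y → ℝ :=
  fun y => if (f ⁻¹' {y}).Nonempty then sSup (μ '' (f ⁻¹' {y})) else 0

/-- The preimage `β ∘ f` of a fuzzy right derivations KU-ideal `β` under a surjective
KU-algebra homomorphism `f` intertwining `d` and `d'` is a fuzzy right derivations
KU-ideal. -/
theorem preimage_fuzzy_right_deriv_ideal {X X' : Type*} [KUAlgebra X] [KUAlgebra X']
    (f : X → X') (hsurj : Function.Surjective f)
    (hhom : ∀ a b : X, f (a ⋆ b) = f a ⋆ f b)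
    (d : X → X) (d' : X' → X') (hcomm : ∀ x : X, f (d x) = d' (f x))
    (β : X' → ℝ) (hβ : IsFuzzyRightDerivKUIdeal d' β) :
    IsFuzzyRightDerivKUIdeal d (β ∘ f) := by
  obtain ⟨hmem, hzero, hideal⟩ := hβ
  -- A homomorphism preserves the constant because `y ⋆ y = 𝟎`, an instance of (KU1).
  have hself : ∀ y : X', y ⋆ y = 𝟎 := fun y => by
    simpa only [KUAlgebra.ku3] using KUAlgebra.ku1 (𝟎 : X') 𝟎 y
  have hf0 : f 𝟎 = 𝟎 := by
    rw [← hself (f 𝟎), ← hhom, KUAlgebra.ku2]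
  refine ⟨fun x => hmem (f x), fun x => ?_, fun x y z => ?_⟩
  · simpa only [Function.comp_apply, hf0] using hzero (f x)
  · simpa only [Function.comp_apply, hcomm, hhom] using hideal (f x) (f y) (f z)
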